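/- Let L and S be positive integers with S ≥ L+2, let γ ∈ (0,1) be the positive root of Lγ + Sγ² = 1, set 1−τ = −log(Sγ)/log γ, let (ξ^j)_{j≥1} be the (L,S)-sequence of points, and let (t_n) be given by t₀ = 1, t₁ = L+S, t_n = L t_{n−1} + S t_{n−2}. Then there exist constants c₃, c₃′ > 0 such that for every integer n ≥ 1 one has c₃′ · t_n^{1−τ} ≤ t_n · D(ξ¹, ξ², …, ξ^{t_n}) ≤ c₃ · t_n^{1−τ}. -/

import Mathlib

open Finset Real

noncomputable section

/-- The `k`-th digit of `n` in base `b`. -/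
def lsDigit (b n k : ℕ) : ℕ := n / b ^ k % b

/-- Membership in the set `N_{L,S}`: for every `k`, the pair of consecutive digits
`(a_k(n), a_{k+1}(n))` in base `L+S` does not lie in
`{L,…,L+S−1} × {1,…,L+S−1}`. -/
def memNLS (L S n : ℕ) : Prop :=
  ∀ k : ℕ, ¬ (L ≤ lsDigit (L + S) n k ∧ lsDigit (L + S) n k ≤ L + S - 1 ∧
      1 ≤ lsDigit (L + S) n (k + 1) ∧ lsDigit (L + S) n (k + 1) ≤ L + S - 1)

/-- The modified digit `ã`: `ã = a` if `a ≤ L−1`, and `ã = L + γ(a−L)` if `L ≤ a`. -/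
def lsTilde (L : ℕ) (γ : ℝ) (a : ℕ) : ℝ :=
  if a < L then (a : ℝ) else (L : ℝ) + γ * ((a : ℝ) - (L : ℝ))

/-- The radical-inverse-type function `φ_{L,S}(n) = Σ_{k=0}^{M} ã_k(n) γ^{k+1}`,
with `M = ⌊log_{L+S} n⌋`. -/
def lsPhi (L S : ℕ) (γ : ℝ) (n : ℕ) : ℝ :=
  ∑ k ∈ Finset.range (Nat.log (L + S) n + 1),
    lsTilde L γ (lsDigit (L + S) n k) * γ ^ (k + 1)

/-- The `(L,S)`-sequence of points: `ξ^j = φ_{L,S}(n_j)` where `n_1 < n_2 < ⋯`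
is the increasing enumeration of `N_{L,S}` (so `n_j = Nat.nth (memNLS L S) (j-1)`). -/
def lsSeq (L S : ℕ) (γ : ℝ) (j : ℕ) : ℝ :=
  lsPhi L S γ (Nat.nth (memNLS L S) (j - 1))

/-- One-dimensional discrepancy of the first `N` terms `x 1, …, x N` of a sequence:
`sup_{0 ≤ a < b ≤ 1} |(1/N) Σ_{j=1}^N χ_{[a,b)}(x j) − (b−a)|`. -/
def discrep (x : ℕ → ℝ) (N : ℕ) : ℝ :=
  ⨆ p : {p : ℝ × ℝ // 0 ≤ p.1 ∧ p.1 < p.2 ∧ p.2 ≤ 1},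
    |(∑ j ∈ Finset.Icc 1 N,
        Set.indicator (Set.Ico p.1.1 p.1.2) (fun _ => (1 : ℝ)) (x j)) / N
      - (p.1.2 - p.1.1)|

/-- Two-dimensional (star) discrepancy of the first `N` terms of a sequence of points
in the unit square:
`sup_{0 < a ≤ 1, 0 < b ≤ 1} |(1/N) Σ_{j=1}^N χ_{[0,a)×[0,b)}(x j) − ab|`. -/
def discrep2 (x : ℕ → ℝ × ℝ) (N : ℕ) : ℝ :=
  ⨆ p : {p : ℝ × ℝ // 0 < p.1 ∧ p.1 ≤ 1 ∧ 0 < p.2 ∧ p.2 ≤ 1},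
    |(∑ j ∈ Finset.Icc 1 N,
        Set.indicator (Set.Ico (0 : ℝ) p.1.1) (fun _ => (1 : ℝ)) (x j).1 *
        Set.indicator (Set.Ico (0 : ℝ) p.1.2) (fun _ => (1 : ℝ)) (x j).2) / N
      - p.1.1 * p.1.2|

section Digits

theorem lsDigit_add_mul_zero {b i : ℕ} (hi : i < b) (m : ℕ) : lsDigit b (i + b * m) 0 = i := by
  simp [lsDigit, Nat.add_mul_mod_self_left, Nat.mod_eq_of_lt hi]

theorem lsDigit_add_mul_succ {b i : ℕ} (hi : i < b) (m k : ℕ) :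
    lsDigit b (i + b * m) (k + 1) = lsDigit b m k := by
  have hb : 0 < b := by omega
  rw [lsDigit, lsDigit, pow_succ', ← Nat.div_div_eq_div_mul, Nat.add_mul_div_left _ _ hb,
    Nat.div_eq_of_lt hi, Nat.zero_add]

theorem lsDigit_lt {b : ℕ} (hb : 0 < b) (n k : ℕ) : lsDigit b n k < b := Nat.mod_lt _ hb

theorem memNLS_iff {L S : ℕ} (hL : 0 < L) (n : ℕ) :
    memNLS L S n ↔ ∀ k, L ≤ lsDigit (L + S) n k → lsDigit (L + S) n (k + 1) = 0 := by
  have hb : 0 < L + S := by omega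
  refine forall_congr' fun k => ?_
  have h1 := lsDigit_lt hb n k
  have h2 := lsDigit_lt hb n (k + 1)
  omega

theorem memNLS_zero {L S : ℕ} (hL : 0 < L) : memNLS L S 0 := by
  rw [memNLS_iff hL]
  intro k _
  simp [lsDigit]

theorem memNLS_add_mul {L S i : ℕ} (hL : 0 < L) (hi : i < L + S) (m : ℕ) :
    memNLS L S (i + (L + S) * m) ↔ (L ≤ i → m % (L + S) = 0) ∧ memNLS L S m := by
  rw [memNLS_iff hL, memNLS_iff hL]
  constructor
  · intro h
    refine ⟨fun hLi => ?_, fun k hk => ?_⟩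
    · have := h 0
      rw [lsDigit_add_mul_zero hi, lsDigit_add_mul_succ hi] at this
      simpa [lsDigit] using this hLi
    · have := h (k + 1)
      rw [lsDigit_add_mul_succ hi, lsDigit_add_mul_succ hi] at this
      exact this hk
  · rintro ⟨h0, h⟩ (_ | k) hk
    · rw [lsDigit_add_mul_zero hi] at hk
      rw [lsDigit_add_mul_succ hi]
      simpa [lsDigit] using h0 hk
    · rw [lsDigit_add_mul_succ hi] at hk ⊢
      exact h k hk

/-- A digit below `L` can be followed by any admissible expansion. -/
theorem memNLS_add_mul_of_lt {L S i : ℕ} (hi : i < L) (m : ℕ) :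
    memNLS L S (i + (L + S) * m) ↔ memNLS L S m := by
  rw [memNLS_add_mul (by omega) (by omega)]
  exact and_iff_right fun h => absurd h (by omega)

/-- A digit at least `L` is followed by a zero digit and then any admissible expansion. -/
theorem memNLS_add_mul_of_ge {L S i : ℕ} (hL : 0 < L) (hLi : L ≤ i) (hi : i < L + S) {j : ℕ}
    (hj : j < L + S) (m : ℕ) :
    memNLS L S (i + (L + S) * (j + (L + S) * m)) ↔ j = 0 ∧ memNLS L S m := by
  rw [memNLS_add_mul hL hi, memNLS_add_mul hL hj, Nat.add_mul_mod_self_left, Nat.mod_eq_of_lt hj]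
  constructor
  · rintro ⟨h, -, hm⟩
    exact ⟨h hLi, hm⟩
  · rintro ⟨rfl, hm⟩
    exact ⟨fun _ => rfl, fun h => absurd h (by omega), hm⟩

theorem lsTilde_of_lt {L a : ℕ} (γ : ℝ) (h : a < L) : lsTilde L γ a = a := if_pos h

theorem lsTilde_add (L : ℕ) (γ : ℝ) (i : ℕ) : lsTilde L γ (L + i) = L + γ * i := by
  simp [lsTilde]

theorem lsPhi_eq_sum {L S : ℕ} (hL : 0 < L) (hb : 1 < L + S) (γ : ℝ) {n K : ℕ}
    (hn : n < (L + S) ^ K) (hK : 0 < K) :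
    lsPhi L S γ n = ∑ k ∈ range K, lsTilde L γ (lsDigit (L + S) n k) * γ ^ (k + 1) := by
  rw [lsPhi]
  refine Finset.sum_subset ?_ fun k _ hk => ?_
  · intro k hk
    have := Nat.log_lt_of_lt_pow' hK.ne' hn
    simp only [Finset.mem_range] at hk ⊢
    omega
  · have hk' : Nat.log (L + S) n < k := by simpa [Nat.lt_succ_iff] using hk
    have : n < (L + S) ^ k := Nat.lt_pow_of_log_lt hb hk'
    rw [lsDigit, Nat.div_eq_of_lt this, Nat.zero_mod, lsTilde_of_lt γ hL]
    simp

theorem lsPhi_zero {L S : ℕ} (hL : 0 < L) (γ : ℝ) : lsPhi L S γ 0 = 0 := by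
  simp [lsPhi, lsDigit, lsTilde, hL]

theorem lsPhi_add_mul {L S i : ℕ} (hL : 0 < L) (hb : 1 < L + S) (γ : ℝ) (hi : i < L + S) (m : ℕ) :
    lsPhi L S γ (i + (L + S) * m) = lsTilde L γ i * γ + γ * lsPhi L S γ m := by
  have hm : m < (L + S) ^ (m + 1) := (Nat.lt_pow_self hb).trans
    (Nat.pow_lt_pow_right hb (Nat.lt_succ_self m))
  have hm' : i + (L + S) * m < (L + S) ^ (m + 1 + 1) := by
    rw [pow_succ' _ (m + 1)]
    calc i + (L + S) * m < (L + S) * (m + 1) := by rw [mul_add]; omega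
      _ ≤ _ := Nat.mul_le_mul_left _ hm
  rw [lsPhi_eq_sum hL hb γ hm (by omega), lsPhi_eq_sum hL hb γ hm' (by omega),
    Finset.sum_range_succ', lsDigit_add_mul_zero hi, Finset.mul_sum, add_comm]
  congr 1
  · simp
  · refine Finset.sum_congr rfl fun k _ => ?_
    rw [lsDigit_add_mul_succ hi]
    ring

theorem lsPhi_nonneg (L S : ℕ) {γ : ℝ} (hγ : 0 ≤ γ) (n : ℕ) : 0 ≤ lsPhi L S γ n := by
  refine Finset.sum_nonneg fun k _ => mul_nonneg ?_ (by positivity)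
  rw [lsTilde]
  split_ifs with h
  · positivity
  · have : (L : ℝ) ≤ (lsDigit (L + S) n k : ℝ) := by exact_mod_cast not_lt.mp h
    have := mul_nonneg hγ (sub_nonneg.mpr this)
    positivity

theorem lsPhi_lt_one {L S : ℕ} (hL : 0 < L) (hb : 1 < L + S) {γ : ℝ} (hγ : 0 < γ)
    (hroot : (L : ℝ) * γ + (S : ℝ) * γ ^ 2 = 1) (n : ℕ) (hn : memNLS L S n) :
    lsPhi L S γ n < 1 := by
  induction n using Nat.strong_induction_on with
  | _ n ih =>
  rcases Nat.eq_zero_or_pos n with rfl | hpos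
  · rw [lsPhi_zero hL]
    exact one_pos
  have hb0 : 0 < L + S := by omega
  have hi : n % (L + S) < L + S := Nat.mod_lt _ hb0
  have hlt : n / (L + S) < n := Nat.div_lt_self hpos hb
  have hn' : n = n % (L + S) + (L + S) * (n / (L + S)) := (Nat.mod_add_div _ _).symm
  generalize n % (L + S) = i at *
  generalize n / (L + S) = m at *
  subst hn'
  rw [lsPhi_add_mul hL hb γ hi]
  rcases lt_or_ge i L with h | h
  · have := ih m hlt ((memNLS_add_mul_of_lt h m).1 hn)
    rw [lsTilde_of_lt γ h]
    have h1 : (i : ℝ) + 1 ≤ L := by exact_mod_cast h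
    have h2 : (i + 1) * γ ≤ L * γ := by gcongr
    have h3 : γ * lsPhi L S γ m < γ * 1 := by gcongr
    have h4 : 0 ≤ (S : ℝ) * γ ^ 2 := by positivity
    linarith
  · have hj : m % (L + S) < L + S := Nat.mod_lt _ hb0
    have hm' : m = m % (L + S) + (L + S) * (m / (L + S)) := (Nat.mod_add_div _ _).symm
    have hle : m / (L + S) ≤ m := Nat.div_le_self _ _
    generalize m % (L + S) = j at *
    generalize m / (L + S) = r at *
    subst hm'
    obtain ⟨rfl, hr⟩ := (memNLS_add_mul_of_ge hL h hi hj r).1 hn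
    have := ih r (by omega) hr
    obtain ⟨i, rfl⟩ := Nat.exists_eq_add_of_le h
    rw [lsPhi_add_mul hL hb γ hj, lsTilde_of_lt γ hL, lsTilde_add]
    have h1 : (i : ℝ) + 1 ≤ S := by exact_mod_cast (by omega : i + 1 ≤ S)
    have h2 : (i + 1) * γ ^ 2 ≤ S * γ ^ 2 := by gcongr
    have h3 : γ ^ 2 * lsPhi L S γ r < γ ^ 2 * 1 := by gcongr
    push_cast
    nlinarith

end Digits

section Sums

theorem sum_range_mul_eq (b k : ℕ) (g : ℕ → ℝ) :
    ∑ m ∈ range (b * k), g m = ∑ m ∈ range k, ∑ i ∈ range b, g (i + b * m) := by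
  induction k with
  | zero => simp
  | succ k ih =>
    rw [mul_add, mul_one, Finset.sum_range_add, ih, Finset.sum_range_succ]
    simp only [add_comm]

open Classical in
/-- The sum of `f` over the points `φ(m)` with `m ∈ N_{L,S}` having at most `n` digits. -/
def lsSum (L S : ℕ) (γ : ℝ) (n : ℕ) (f : ℝ → ℝ) : ℝ :=
  ∑ m ∈ range ((L + S) ^ n), if memNLS L S m then f (lsPhi L S γ m) else 0

theorem lsSum_zero {L : ℕ} (S : ℕ) (hL : 0 < L) (γ : ℝ) (f : ℝ → ℝ) : lsSum L S γ 0 f = f 0 := by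
  simp [lsSum, memNLS_zero hL, lsPhi_zero hL]

theorem lsSum_congr {L S : ℕ} (hL : 0 < L) (hb : 1 < L + S) {γ : ℝ} (hγ : 0 < γ)
    (hroot : (L : ℝ) * γ + (S : ℝ) * γ ^ 2 = 1) (n : ℕ) {f g : ℝ → ℝ}
    (h : ∀ u, 0 ≤ u → u < 1 → f u = g u) : lsSum L S γ n f = lsSum L S γ n g := by
  refine Finset.sum_congr rfl fun m _ => ?_
  split_ifs with hm
  · exact h _ (lsPhi_nonneg L S hγ.le m) (lsPhi_lt_one hL hb hγ hroot m hm)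
  · rfl

theorem lsSum_sub (L S : ℕ) (γ : ℝ) (n : ℕ) (f g : ℝ → ℝ) :
    lsSum L S γ n (fun u => f u - g u) = lsSum L S γ n f - lsSum L S γ n g := by
  rw [lsSum, lsSum, lsSum, ← Finset.sum_sub_distrib]
  refine Finset.sum_congr rfl fun m _ => ?_
  split_ifs <;> simp

theorem lsSum_const_zero (L S : ℕ) (γ : ℝ) (n : ℕ) : lsSum L S γ n (fun _ => 0) = 0 := by
  simp [lsSum]

open Classical in
theorem sum_memNLS_large_digit {L S i : ℕ} (hL : 0 < L) (hb : 1 < L + S) (γ : ℝ) (hi : i < S)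
    (n : ℕ) (f : ℝ → ℝ) :
    (∑ m ∈ range ((L + S) ^ n), if memNLS L S (L + i + (L + S) * m) then
        f (lsPhi L S γ (L + i + (L + S) * m)) else 0) =
      lsSum L S γ (n - 1) fun u => f (L * γ + i * γ ^ 2 + γ ^ 2 * u) := by
  have key : ∀ r, memNLS L S r → f (lsPhi L S γ (L + i + (L + S) * (0 + (L + S) * r))) =
      f (L * γ + i * γ ^ 2 + γ ^ 2 * lsPhi L S γ r) := by
    intro r _
    rw [lsPhi_add_mul hL hb γ (by omega), lsPhi_add_mul hL hb γ (by omega), lsTilde_add,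
      lsTilde_of_lt γ hL]
    congr 1
    push_cast
    ring
  have hmem : ∀ j r, j < L + S → (memNLS L S (L + i + (L + S) * (j + (L + S) * r)) ↔
      j = 0 ∧ memNLS L S r) := fun j r hj =>
    memNLS_add_mul_of_ge hL (by omega) (by omega) hj r
  cases n with
  | zero =>
    have h0 := key 0 (memNLS_zero hL)
    have h1 := (hmem 0 0 (by omega)).2 ⟨rfl, memNLS_zero hL⟩
    simp only [mul_zero, add_zero] at h0 h1
    simp [lsSum_zero S hL, h1, h0, lsPhi_zero hL]
  | succ n =>
    rw [pow_succ', sum_range_mul_eq, lsSum]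
    refine Finset.sum_congr rfl fun r _ => ?_
    rw [Finset.sum_eq_single 0]
    · simp only [hmem 0 r (by omega), true_and]
      split_ifs with hr
      · exact key r hr
      · rfl
    · intro j hj hj0
      rw [if_neg]
      rw [hmem j r (Finset.mem_range.1 hj)]
      exact fun h => hj0 h.1
    · intro h
      exact absurd (Finset.mem_range.2 (by omega)) h

/-- Self-similarity of the point sets; for `n = 0` the truncation `n - 1 = 0` is the right value. -/
theorem lsSum_succ {L S : ℕ} (hL : 0 < L) (hb : 1 < L + S) (γ : ℝ) (n : ℕ) (f : ℝ → ℝ) :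
    lsSum L S γ (n + 1) f =
      (∑ i ∈ range L, lsSum L S γ n fun u => f (i * γ + γ * u)) +
      ∑ i ∈ range S, lsSum L S γ (n - 1) fun u => f (L * γ + i * γ ^ 2 + γ ^ 2 * u) := by
  rw [lsSum, pow_succ', sum_range_mul_eq, Finset.sum_comm, Finset.sum_range_add]
  congr 1
  · refine Finset.sum_congr rfl fun i hi => ?_
    have hi := Finset.mem_range.1 hi
    refine Finset.sum_congr rfl fun m _ => ?_
    rw [lsPhi_add_mul hL hb γ (by omega), lsTilde_of_lt γ hi]
    classical exact if_congr (memNLS_add_mul_of_lt hi m) rfl rfl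
  · exact Finset.sum_congr rfl fun i hi =>
      sum_memNLS_large_digit hL hb γ (Finset.mem_range.1 hi) n f

theorem lsSum_one {L S : ℕ} (hL : 0 < L) (hb : 1 < L + S) (γ : ℝ) {t : ℕ → ℕ} (ht0 : t 0 = 1)
    (ht : ∀ n, t (n + 1) = L * t n + S * t (n - 1)) (n : ℕ) :
    lsSum L S γ n (fun _ => 1) = t n := by
  induction n using Nat.strong_induction_on with
  | _ n ih =>
  cases n with
  | zero => simp [lsSum_zero S hL, ht0]
  | succ n =>
    rw [lsSum_succ hL hb, ih n (by omega), ih (n - 1) (by omega), ht]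
    simp

open Classical in
theorem sum_range_count_nth (p : ℕ → Prop) (g : ℕ → ℝ) (N : ℕ) :
    ∑ j ∈ range (Nat.count p N), g (Nat.nth p j) = ∑ m ∈ range N, if p m then g m else 0 := by
  induction N with
  | zero => simp
  | succ N ih =>
    rw [Nat.count_succ, Finset.sum_range_succ, ← ih]
    split_ifs with h
    · rw [Finset.sum_range_succ, Nat.nth_count h]
    · simp

theorem sum_lsSeq {L S : ℕ} (hL : 0 < L) (hb : 1 < L + S) (γ : ℝ) {t : ℕ → ℕ} (ht0 : t 0 = 1)
    (ht : ∀ n, t (n + 1) = L * t n + S * t (n - 1)) (n : ℕ) (f : ℝ → ℝ) :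
    ∑ j ∈ Finset.Icc 1 (t n), f (lsSeq L S γ j) = lsSum L S γ n f := by
  classical
  have hcount : Nat.count (memNLS L S) ((L + S) ^ n) = t n := by
    have h1 := lsSum_one hL hb γ ht0 ht n
    have h2 := sum_range_count_nth (memNLS L S) (fun _ => (1 : ℝ)) ((L + S) ^ n)
    rw [lsSum, ← h2] at h1
    simpa using h1
  have h := sum_range_count_nth (memNLS L S) (fun m => f (lsPhi L S γ m)) ((L + S) ^ n)
  rw [hcount] at h
  rw [lsSum, ← h, ← Finset.Ico_add_one_right_eq_Icc, Finset.sum_Ico_eq_sum_range]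
  simp [lsSeq]

end Sums

section LocalDiscrepancy

open Classical in
/-- The number of points `φ(m) < x` with `m ∈ N_{L,S}` having at most `n` digits. -/
def lsCount (L S : ℕ) (γ : ℝ) (n : ℕ) (x : ℝ) : ℝ :=
  lsSum L S γ n fun u => if u < x then 1 else 0

variable {L S : ℕ} {γ : ℝ} {t : ℕ → ℕ}

theorem lsCount_succ (hL : 0 < L) (hb : 1 < L + S) (hγ : 0 < γ) (n : ℕ) (x : ℝ) :
    lsCount L S γ (n + 1) x =
      (∑ i ∈ range L, lsCount L S γ n (x / γ - i)) +
      ∑ i ∈ range S, lsCount L S γ (n - 1) ((x - L * γ) / γ ^ 2 - i) := by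
  have h1 : ∀ (i : ℕ) (u : ℝ), i * γ + γ * u < x ↔ u < x / γ - i := by
    intro i u
    rw [lt_sub_iff_add_lt, lt_div_iff₀ hγ]
    ring_nf
  have h2 : ∀ (i : ℕ) (u : ℝ), L * γ + i * γ ^ 2 + γ ^ 2 * u < x ↔
      u < (x - L * γ) / γ ^ 2 - i := by
    intro i u
    rw [lt_sub_iff_add_lt, lt_div_iff₀ (by positivity), lt_sub_iff_add_lt]
    ring_nf
  simp only [lsCount, lsSum_succ hL hb, h1, h2]

theorem lsCount_of_nonpos (hL : 0 < L) (hb : 1 < L + S) (hγ : 0 < γ)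
    (hroot : (L : ℝ) * γ + (S : ℝ) * γ ^ 2 = 1) (n : ℕ) {x : ℝ} (hx : x ≤ 0) :
    lsCount L S γ n x = 0 := by
  exact (lsSum_congr hL hb hγ hroot n fun u hu _ => if_neg (hx.trans hu).not_gt).trans
    (lsSum_const_zero L S γ n)

theorem lsCount_of_one_le (hL : 0 < L) (hb : 1 < L + S) (hγ : 0 < γ)
    (hroot : (L : ℝ) * γ + (S : ℝ) * γ ^ 2 = 1) (ht0 : t 0 = 1)
    (ht : ∀ n, t (n + 1) = L * t n + S * t (n - 1)) (n : ℕ) {x : ℝ} (hx : 1 ≤ x) :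
    lsCount L S γ n x = t n := by
  rw [lsCount, ← lsSum_one hL hb γ ht0 ht n]
  exact lsSum_congr hL hb hγ hroot n fun u _ hu => if_pos (hu.trans_le hx)

/-- Among consecutive unit translates, all but one see either every point or none. -/
theorem sum_range_lsCount_sub (hL : 0 < L) (hb : 1 < L + S) (hγ : 0 < γ)
    (hroot : (L : ℝ) * γ + (S : ℝ) * γ ^ 2 = 1) (ht0 : t 0 = 1)
    (ht : ∀ n, t (n + 1) = L * t n + S * t (n - 1)) (n : ℕ) {j K : ℕ} (hj : j < K) {y : ℝ}
    (hy0 : 0 ≤ y) (hy1 : y ≤ 1) :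
    ∑ i ∈ range K, lsCount L S γ n (j + y - i) = j * t n + lsCount L S γ n y := by
  obtain ⟨r, rfl⟩ := Nat.exists_eq_add_of_lt hj
  rw [add_assoc, Finset.sum_range_add, Finset.sum_range_succ']
  have h1 : ∑ i ∈ range j, lsCount L S γ n (j + y - i) = ∑ i ∈ range j, (t n : ℝ) := by
    refine Finset.sum_congr rfl fun i hi => lsCount_of_one_le hL hb hγ hroot ht0 ht n ?_
    have : (i : ℝ) + 1 ≤ j := by exact_mod_cast Finset.mem_range.1 hi
    linarith
  have h2 : ∑ i ∈ range r, lsCount L S γ n (j + y - (j + (i + 1) : ℕ)) = 0 := by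
    refine Finset.sum_eq_zero fun i _ => lsCount_of_nonpos hL hb hγ hroot n ?_
    push_cast
    have : (0 : ℝ) ≤ i := by positivity
    linarith
  rw [h1, h2]
  simp

theorem lsCount_succ_long (hL : 0 < L) (hb : 1 < L + S) (hγ : 0 < γ)
    (hroot : (L : ℝ) * γ + (S : ℝ) * γ ^ 2 = 1) (ht0 : t 0 = 1)
    (ht : ∀ n, t (n + 1) = L * t n + S * t (n - 1)) (n : ℕ) {j : ℕ} (hj : j < L) {y : ℝ}
    (hy0 : 0 ≤ y) (hy1 : y ≤ 1) :
    lsCount L S γ (n + 1) ((j + y) * γ) = j * t n + lsCount L S γ n y := by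
  rw [lsCount_succ hL hb hγ, mul_div_cancel_right₀ _ hγ.ne',
    sum_range_lsCount_sub hL hb hγ hroot ht0 ht n hj hy0 hy1, add_eq_left]
  refine Finset.sum_eq_zero fun i _ => lsCount_of_nonpos hL hb hγ hroot _ ?_
  have h1 : (j : ℝ) + 1 ≤ L := by exact_mod_cast hj
  have h2 : (j + y) * γ ≤ L * γ := by gcongr; linarith
  have h3 : ((j + y) * γ - L * γ) / γ ^ 2 ≤ 0 :=
    div_nonpos_of_nonpos_of_nonneg (by linarith) (by positivity)
  have : (0 : ℝ) ≤ i := by positivity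
  linarith

theorem lsCount_succ_short (hL : 0 < L) (hb : 1 < L + S) (hγ : 0 < γ)
    (hroot : (L : ℝ) * γ + (S : ℝ) * γ ^ 2 = 1) (ht0 : t 0 = 1)
    (ht : ∀ n, t (n + 1) = L * t n + S * t (n - 1)) (n : ℕ) {j : ℕ} (hj : j < S) {y : ℝ}
    (hy0 : 0 ≤ y) (hy1 : y ≤ 1) :
    lsCount L S γ (n + 1) (L * γ + (j + y) * γ ^ 2) =
      L * t n + j * t (n - 1) + lsCount L S γ (n - 1) y := by
  have hlong : ∑ i ∈ range L, lsCount L S γ n ((L * γ + (j + y) * γ ^ 2) / γ - i) =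
      ∑ i ∈ range L, (t n : ℝ) := by
    refine Finset.sum_congr rfl fun i hi => lsCount_of_one_le hL hb hγ hroot ht0 ht n ?_
    have h1 : (i : ℝ) + 1 ≤ L := by exact_mod_cast Finset.mem_range.1 hi
    have h2 : (L * γ + (j + y) * γ ^ 2) / γ = L + (j + y) * γ := by
      field_simp
    have h3 : 0 ≤ (j + y) * γ := by positivity
    linarith
  rw [lsCount_succ hL hb hγ, hlong, add_sub_cancel_left,
    mul_div_cancel_right₀ _ (by positivity : γ ^ 2 ≠ 0),
    sum_range_lsCount_sub hL hb hγ hroot ht0 ht _ hj hy0 hy1]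
  simp [add_assoc]

theorem sub_mul_eq_pow (hroot : (L : ℝ) * γ + (S : ℝ) * γ ^ 2 = 1) (ht0 : t 0 = 1)
    (ht : ∀ n, t (n + 1) = L * t n + S * t (n - 1)) (n : ℕ) :
    (t (n - 1) : ℝ) - γ * t n = (1 - γ) * (-(S * γ)) ^ n := by
  induction n with
  | zero => simp [ht0]
  | succ n ih =>
    rw [pow_succ, ← mul_assoc, ← ih, ht, Nat.add_sub_cancel]
    push_cast
    linear_combination (-(t n : ℝ)) * hroot

theorem abs_lsCount_sub_succ_le (hL : 0 < L) (hb : 1 < L + S) (hγ : 0 < γ) (hγ1 : γ < 1)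
    (hroot : (L : ℝ) * γ + (S : ℝ) * γ ^ 2 = 1) (hq : 1 < S * γ) (ht0 : t 0 = 1)
    (ht : ∀ n, t (n + 1) = L * t n + S * t (n - 1)) (n : ℕ) {M : ℝ}
    (h0 : ∀ x, 0 ≤ x → x ≤ 1 → |lsCount L S γ n x - t n * x| ≤ M)
    (h1 : ∀ x, 0 ≤ x → x ≤ 1 → |lsCount L S γ (n - 1) x - t (n - 1) * x| ≤ M)
    {x : ℝ} (hx0 : 0 ≤ x) (hx1 : x ≤ 1) :
    |lsCount L S γ (n + 1) x - t (n + 1) * x| ≤ M + (L + 2 * S) * (S * γ) ^ (n + 1) := by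
  set Q : ℝ := (S * γ) ^ (n + 1) with hQ
  have hq0 : (0 : ℝ) ≤ S * γ := by linarith
  have hQ0 : 0 ≤ Q := by positivity
  have habs : ∀ k, |(1 - γ) * (-(S * γ)) ^ k| ≤ (S * γ) ^ k := by
    intro k
    rw [abs_mul, abs_pow, abs_neg, abs_of_nonneg hq0, abs_of_nonneg (by linarith)]
    exact mul_le_of_le_one_left (by positivity) (by linarith)
  have hd1 : |(t n : ℝ) - γ * t (n + 1)| ≤ Q := by
    have := sub_mul_eq_pow hroot ht0 ht (n + 1)
    rw [Nat.add_sub_cancel] at this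
    rw [this]
    exact habs _
  have hd0 : |(t (n - 1) : ℝ) - γ * t n| ≤ Q := by
    rw [sub_mul_eq_pow hroot ht0 ht n]
    exact (habs n).trans (pow_le_pow_right₀ hq.le (Nat.le_succ n))
  have hd2 : |(t (n - 1) : ℝ) - γ ^ 2 * t (n + 1)| ≤ 2 * Q := by
    have e : (t (n - 1) : ℝ) - γ ^ 2 * t (n + 1) =
      ((t (n - 1) : ℝ) - γ * t n) + γ * ((t n : ℝ) - γ * t (n + 1)) := by ring
    have h3 : |γ * ((t n : ℝ) - γ * t (n + 1))| ≤ 1 * Q := by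
      rw [abs_mul, abs_of_pos hγ]
      gcongr
    rw [e]
    linarith [abs_add_le ((t (n - 1) : ℝ) - γ * t n) (γ * ((t n : ℝ) - γ * t (n + 1)))]
  have hM : 0 ≤ M := (abs_nonneg _).trans (h0 0 le_rfl zero_le_one)
  rcases lt_or_ge x (L * γ) with hx | hx
  · obtain ⟨j, y, hj, hy0, hy1, rfl⟩ : ∃ (j : ℕ) (y : ℝ), j < L ∧ 0 ≤ y ∧ y ≤ 1 ∧
        x = (j + y) * γ := by
      have hz : 0 ≤ x / γ := by positivity
      refine ⟨⌊x / γ⌋₊, x / γ - ⌊x / γ⌋₊, ?_, ?_, ?_, ?_⟩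
      · rw [Nat.floor_lt hz, div_lt_iff₀ hγ]
        exact hx
      · linarith [Nat.floor_le hz]
      · linarith [Nat.lt_floor_add_one (x / γ)]
      · field_simp
        ring
    rw [lsCount_succ_long hL hb hγ hroot ht0 ht n hj hy0 hy1]
    have e : (j : ℝ) * t n + lsCount L S γ n y - t (n + 1) * ((j + y) * γ) =
        (lsCount L S γ n y - t n * y) + (j + y) * (t n - γ * t (n + 1)) := by ring
    have h3 : |((j : ℝ) + y) * (t n - γ * t (n + 1))| ≤ L * Q := by
      have : (j : ℝ) + 1 ≤ L := by exact_mod_cast hj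
      rw [abs_mul, abs_of_nonneg (by positivity)]
      gcongr
      linarith
    have h4 : (0 : ℝ) ≤ 2 * S * Q := by positivity
    rw [e]
    linarith [abs_add_le (lsCount L S γ n y - t n * y) ((j + y) * (t n - γ * t (n + 1))),
      h0 y hy0 hy1]
  · rcases hx1.eq_or_lt with rfl | hx1
    · rw [lsCount_of_one_le hL hb hγ hroot ht0 ht _ le_rfl, mul_one, sub_self, abs_zero]
      positivity
    obtain ⟨j, y, hj, hy0, hy1, rfl⟩ : ∃ (j : ℕ) (y : ℝ), j < S ∧ 0 ≤ y ∧ y ≤ 1 ∧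
        x = L * γ + (j + y) * γ ^ 2 := by
      have hγ2 : 0 < γ ^ 2 := by positivity
      have hz : 0 ≤ (x - L * γ) / γ ^ 2 := div_nonneg (by linarith) hγ2.le
      refine ⟨⌊(x - L * γ) / γ ^ 2⌋₊, (x - L * γ) / γ ^ 2 - ⌊(x - L * γ) / γ ^ 2⌋₊, ?_, ?_, ?_, ?_⟩
      · rw [Nat.floor_lt hz, div_lt_iff₀ hγ2]
        linarith
      · linarith [Nat.floor_le hz]
      · linarith [Nat.lt_floor_add_one ((x - L * γ) / γ ^ 2)]
      · rw [add_sub_cancel, div_mul_cancel₀ _ hγ2.ne']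
        ring
    rw [lsCount_succ_short hL hb hγ hroot ht0 ht n hj hy0 hy1]
    have e : (L : ℝ) * t n + j * t (n - 1) + lsCount L S γ (n - 1) y -
          t (n + 1) * (L * γ + (j + y) * γ ^ 2) =
        (lsCount L S γ (n - 1) y - t (n - 1) * y) + L * (t n - γ * t (n + 1)) +
          (j + y) * (t (n - 1) - γ ^ 2 * t (n + 1)) := by ring
    have h3 : |(L : ℝ) * (t n - γ * t (n + 1))| ≤ L * Q := by
      rw [abs_mul, Nat.abs_cast]
      gcongr
    have h4 : |((j : ℝ) + y) * (t (n - 1) - γ ^ 2 * t (n + 1))| ≤ S * (2 * Q) := by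
      have : (j : ℝ) + 1 ≤ S := by exact_mod_cast hj
      rw [abs_mul, abs_of_nonneg (by positivity)]
      gcongr
      linarith
    rw [e]
    linarith [abs_add_three (lsCount L S γ (n - 1) y - t (n - 1) * y) (L * (t n - γ * t (n + 1)))
      ((j + y) * (t (n - 1) - γ ^ 2 * t (n + 1))), h1 y hy0 hy1]

theorem abs_lsCount_sub_le (hL : 0 < L) (hb : 1 < L + S) (hγ : 0 < γ) (hγ1 : γ < 1)
    (hroot : (L : ℝ) * γ + (S : ℝ) * γ ^ 2 = 1) (hq : 1 < S * γ) (ht0 : t 0 = 1)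
    (ht : ∀ n, t (n + 1) = L * t n + S * t (n - 1)) (n : ℕ) {x : ℝ} (hx0 : 0 ≤ x) (hx1 : x ≤ 1) :
    |lsCount L S γ n x - t n * x| ≤
      (L + 2 * S) * (S * γ) / (S * γ - 1) * (S * γ) ^ n := by
  induction n using Nat.strong_induction_on generalizing x with
  | _ n ih =>
  set q : ℝ := S * γ with hqdef
  have hL1 : (1 : ℝ) ≤ L := by exact_mod_cast hL
  have hS0 : (0 : ℝ) ≤ S := by positivity
  have hq1 : 0 < q - 1 := by linarith
  have hK : (1 : ℝ) ≤ (L + 2 * S) * q / (q - 1) := by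
    rw [one_le_div hq1]
    nlinarith
  have hK' : (L + 2 * S) * q / (q - 1) * (q - 1) = (L + 2 * S) * q := div_mul_cancel₀ _ hq1.ne'
  set K : ℝ := (L + 2 * S) * q / (q - 1) with hKdef
  cases n with
  | zero =>
    rw [lsCount, lsSum_zero S hL, ht0, pow_zero, mul_one, abs_le]
    split_ifs <;> push_cast <;> constructor <;> linarith
  | succ n =>
    have hle : K * q ^ (n - 1) ≤ K * q ^ n := by
      gcongr
      · exact hq.le
      · omega
    refine (abs_lsCount_sub_succ_le hL hb hγ hγ1 hroot hq ht0 ht n (M := K * q ^ n)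
      (fun x h0 h1 => ih n (by omega) h0 h1)
      (fun x h0 h1 => (ih (n - 1) (by omega) h0 h1).trans hle) hx0 hx1).trans_eq ?_
    rw [pow_succ]
    linear_combination (-q ^ n) * hK'

end LocalDiscrepancy

section Discrepancy

variable {L S : ℕ} {γ : ℝ} {t : ℕ → ℕ}

theorem sum_indicator_lsSeq (hL : 0 < L) (hb : 1 < L + S) (ht0 : t 0 = 1)
    (ht : ∀ n, t (n + 1) = L * t n + S * t (n - 1)) (n : ℕ) {a b : ℝ} (hab : a < b) :
    ∑ j ∈ Finset.Icc 1 (t n), Set.indicator (Set.Ico a b) (fun _ => (1 : ℝ)) (lsSeq L S γ j) =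
      lsCount L S γ n b - lsCount L S γ n a := by
  classical
  rw [sum_lsSeq hL hb γ ht0 ht n, lsCount, lsCount, ← lsSum_sub]
  congr 1
  ext u
  simp only [Set.indicator, Set.mem_Ico]
  grind

theorem one_le_mul_pow_and_le_inv (hγ : 0 < γ) (hγ1 : γ < 1)
    (hroot : (L : ℝ) * γ + (S : ℝ) * γ ^ 2 = 1) (ht0 : t 0 = 1)
    (ht : ∀ n, t (n + 1) = L * t n + S * t (n - 1)) (n : ℕ) :
    1 ≤ t n * γ ^ n ∧ t n * γ ^ n ≤ γ⁻¹ := by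
  have hinv : 1 ≤ γ⁻¹ := (one_le_inv₀ hγ).2 hγ1.le
  have hS0 : (0 : ℝ) ≤ S := by positivity
  induction n using Nat.strong_induction_on with
  | _ n ih =>
  rcases n with _ | _ | n
  · simpa [ht0] using hinv
  · have h1 : t 1 = L + S := by simpa [ht0] using ht 0
    have h2 : γ * γ⁻¹ = 1 := mul_inv_cancel₀ hγ.ne'
    have h3 : S * γ ^ 2 ≤ S * γ := by
      have : γ ^ 2 ≤ γ := by nlinarith
      gcongr
    have h4 : γ⁻¹ = L + S * γ := by linear_combination (-γ⁻¹) * hroot + (L + S * γ) * h2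
    have h5 : L * γ ≤ L := mul_le_of_le_one_right (by positivity) hγ1.le
    simp only [zero_add, h1, pow_one]
    push_cast
    constructor <;> linarith
  · have h0 := ih n (by omega)
    have h1 := ih (n + 1) (by omega)
    have e : (t (n + 2) : ℝ) * γ ^ (n + 2) =
        L * γ * (t (n + 1) * γ ^ (n + 1)) + S * γ ^ 2 * (t n * γ ^ n) := by
      rw [ht (n + 1), Nat.add_sub_cancel]
      push_cast
      ring
    have hA : 0 ≤ L * γ := by positivity
    have hB : 0 ≤ S * γ ^ 2 := by positivity
    rw [show n + 1 + 1 = n + 2 from rfl, e]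
    constructor
    · linarith [mul_le_mul_of_nonneg_left h1.1 hA, mul_le_mul_of_nonneg_left h0.1 hB]
    · calc _ ≤ L * γ * γ⁻¹ + S * γ ^ 2 * γ⁻¹ :=
            add_le_add (mul_le_mul_of_nonneg_left h1.2 hA) (mul_le_mul_of_nonneg_left h0.2 hB)
        _ = γ⁻¹ := by rw [← add_mul, hroot, one_mul]

theorem abs_sum_indicator_lsSeq_div_sub (hL : 0 < L) (hb : 1 < L + S) (ht0 : t 0 = 1)
    (ht : ∀ n, t (n + 1) = L * t n + S * t (n - 1)) {n : ℕ} (hn : 0 < (t n : ℝ)) {a b : ℝ}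
    (hab : a < b) :
    |(∑ j ∈ Finset.Icc 1 (t n),
        Set.indicator (Set.Ico a b) (fun _ => (1 : ℝ)) (lsSeq L S γ j)) / t n - (b - a)| =
      |(lsCount L S γ n b - t n * b) - (lsCount L S γ n a - t n * a)| / t n := by
  rw [sum_indicator_lsSeq hL hb ht0 ht n hab, ← abs_of_pos hn, ← abs_div, abs_of_pos hn]
  congr 1
  field_simp
  ring

theorem abs_sum_indicator_lsSeq_le (hL : 0 < L) (hb : 1 < L + S) (hγ : 0 < γ) (hγ1 : γ < 1)
    (hroot : (L : ℝ) * γ + (S : ℝ) * γ ^ 2 = 1) (hq : 1 < S * γ) (ht0 : t 0 = 1)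
    (ht : ∀ n, t (n + 1) = L * t n + S * t (n - 1)) {n : ℕ} (hn : 0 < (t n : ℝ))
    (p : {p : ℝ × ℝ // 0 ≤ p.1 ∧ p.1 < p.2 ∧ p.2 ≤ 1}) :
    |(∑ j ∈ Finset.Icc 1 (t n),
        Set.indicator (Set.Ico p.1.1 p.1.2) (fun _ => (1 : ℝ)) (lsSeq L S γ j)) / t n
          - (p.1.2 - p.1.1)| ≤
      2 * ((L + 2 * S) * (S * γ) / (S * γ - 1)) * (S * γ) ^ n / t n := by
  obtain ⟨⟨a, b⟩, ha, hab, hb1⟩ := p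
  rw [abs_sum_indicator_lsSeq_div_sub hL hb ht0 ht hn hab]
  gcongr
  have h1 := abs_lsCount_sub_le hL hb hγ hγ1 hroot hq ht0 ht n (x := a) ha (hab.le.trans hb1)
  have h2 := abs_lsCount_sub_le hL hb hγ hγ1 hroot hq ht0 ht n (x := b) (ha.trans hab.le) hb1
  have h3 := abs_sub (lsCount L S γ n b - t n * b) (lsCount L S γ n a - t n * a)
  dsimp only at *
  linarith

theorem mul_discrep_lsSeq_le (hL : 0 < L) (hb : 1 < L + S) (hγ : 0 < γ) (hγ1 : γ < 1)
    (hroot : (L : ℝ) * γ + (S : ℝ) * γ ^ 2 = 1) (hq : 1 < S * γ) (ht0 : t 0 = 1)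
    (ht : ∀ n, t (n + 1) = L * t n + S * t (n - 1)) {n : ℕ} (hn : 0 < (t n : ℝ)) :
    t n * discrep (lsSeq L S γ) (t n) ≤
      2 * ((L + 2 * S) * (S * γ) / (S * γ - 1)) * (S * γ) ^ n := by
  have : Nonempty {p : ℝ × ℝ // 0 ≤ p.1 ∧ p.1 < p.2 ∧ p.2 ≤ 1} := ⟨⟨(0, 1), by norm_num⟩⟩
  rw [mul_comm, ← le_div_iff₀ hn]
  exact ciSup_le (abs_sum_indicator_lsSeq_le hL hb hγ hγ1 hroot hq ht0 ht hn)

/-- The interval `[0, γ)` already realises the order of the discrepancy. -/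
theorem le_mul_discrep_lsSeq (hL : 0 < L) (hb : 1 < L + S) (hγ : 0 < γ) (hγ1 : γ < 1)
    (hroot : (L : ℝ) * γ + (S : ℝ) * γ ^ 2 = 1) (hq : 1 < S * γ) (ht0 : t 0 = 1)
    (ht : ∀ n, t (n + 1) = L * t n + S * t (n - 1)) {n : ℕ} (hn : 0 < (t (n + 1) : ℝ)) :
    (1 - γ) * (S * γ) ^ (n + 1) ≤ t (n + 1) * discrep (lsSeq L S γ) (t (n + 1)) := by
  have hbdd := le_ciSup (f := fun p : {p : ℝ × ℝ // 0 ≤ p.1 ∧ p.1 < p.2 ∧ p.2 ≤ 1} =>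
      |(∑ j ∈ Finset.Icc 1 (t (n + 1)),
        Set.indicator (Set.Ico p.1.1 p.1.2) (fun _ => (1 : ℝ)) (lsSeq L S γ j)) / t (n + 1)
          - (p.1.2 - p.1.1)|)
    ⟨_, Set.forall_mem_range.2 (abs_sum_indicator_lsSeq_le hL hb hγ hγ1 hroot hq ht0 ht hn)⟩
    ⟨(0, γ), le_rfl, hγ, hγ1.le⟩
  have hcount : lsCount L S γ (n + 1) γ = t n := by
    have h := lsCount_succ_long hL hb hγ hroot ht0 ht n hL zero_le_one le_rfl
    rw [lsCount_of_one_le hL hb hγ hroot ht0 ht n le_rfl] at h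
    simpa using h
  have hd := sub_mul_eq_pow hroot ht0 ht (n + 1)
  rw [Nat.add_sub_cancel] at hd
  have habs : |(t n : ℝ) - t (n + 1) * γ| = (1 - γ) * (S * γ) ^ (n + 1) := by
    rw [mul_comm (t (n + 1) : ℝ), hd, abs_mul, abs_pow, abs_neg, abs_of_pos (by linarith),
      abs_of_pos (by linarith : 0 < S * γ)]
  dsimp only at hbdd
  rw [abs_sum_indicator_lsSeq_div_sub hL hb ht0 ht hn hγ, hcount,
    lsCount_of_nonpos hL hb hγ hroot _ le_rfl, mul_zero, sub_zero, sub_zero, habs,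
    div_le_iff₀' hn] at hbdd
  exact hbdd

theorem pow_le_rpow_and_rpow_le (hγ : 0 < γ) (hγ1 : γ < 1)
    (hroot : (L : ℝ) * γ + (S : ℝ) * γ ^ 2 = 1) (hq : 1 < S * γ) (ht0 : t 0 = 1)
    (ht : ∀ n, t (n + 1) = L * t n + S * t (n - 1)) (n : ℕ) :
    (S * γ) ^ n ≤ (t n : ℝ) ^ (-Real.log (S * γ) / Real.log γ) ∧
      (t n : ℝ) ^ (-Real.log (S * γ) / Real.log γ) ≤ (S * γ) * (S * γ) ^ n := by
  obtain ⟨h1, h2⟩ := one_le_mul_pow_and_le_inv hγ hγ1 hroot ht0 ht n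
  have hlog : Real.log γ < 0 := Real.log_neg hγ hγ1
  have hq0 : 0 < S * γ := by linarith
  have hθ : 0 ≤ -Real.log (S * γ) / Real.log γ :=
    div_nonneg_of_nonpos (by linarith [Real.log_pos hq]) hlog.le
  have hbase : γ⁻¹ ^ (-Real.log (S * γ) / Real.log γ) = S * γ := by
    rw [Real.rpow_def_of_pos (inv_pos.2 hγ), Real.log_inv, neg_mul, mul_div_cancel₀ _ hlog.ne,
      neg_neg, Real.exp_log hq0]
  have hfactor : (t n : ℝ) = γ⁻¹ ^ n * (t n * γ ^ n) := by
    rw [inv_pow]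
    field_simp
  generalize -Real.log (S * γ) / Real.log γ = θ at *
  have hpow : (t n : ℝ) ^ θ = (S * γ) ^ n * (t n * γ ^ n) ^ θ := by
    conv_lhs => rw [hfactor]
    rw [Real.mul_rpow (by positivity) (by positivity), ← Real.rpow_pow_comm (by positivity), hbase]
  rw [hpow]
  constructor
  · exact le_mul_of_one_le_right (by positivity) (Real.one_le_rpow h1 hθ)
  · rw [mul_comm (S * γ)]
    gcongr
    exact (Real.rpow_le_rpow (by positivity) h2 hθ).trans_eq hbase

end Discrepancy

/-- If `S ≥ L+2`, then with `1−τ = −log(Sγ)/log γ` one has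
`c₃′ t_n^{1−τ} ≤ t_n · D(ξ¹,…,ξ^{t_n}) ≤ c₃ t_n^{1−τ}` for all `n ≥ 1`. -/
theorem ls_partition_discrepancy_S_ge_L_add_two (L S : ℕ) (hL : 0 < L) (hS : 0 < S)
    (hSL : L + 2 ≤ S)
    (γ : ℝ) (hγ0 : 0 < γ) (hγ1 : γ < 1)
    (hroot : (L : ℝ) * γ + (S : ℝ) * γ ^ 2 = 1)
    (t : ℕ → ℕ) (ht0 : t 0 = 1) (ht1 : t 1 = L + S)
    (htrec : ∀ n, 2 ≤ n → t n = L * t (n - 1) + S * t (n - 2)) :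
    ∃ c₃ c₃' : ℝ, 0 < c₃ ∧ 0 < c₃' ∧ ∀ n : ℕ, 1 ≤ n →
      c₃' * (t n : ℝ) ^ (-Real.log ((S : ℝ) * γ) / Real.log γ)
          ≤ (t n : ℝ) * discrep (lsSeq L S γ) (t n) ∧
      (t n : ℝ) * discrep (lsSeq L S γ) (t n)
          ≤ c₃ * (t n : ℝ) ^ (-Real.log ((S : ℝ) * γ) / Real.log γ) := by
  have hb : 1 < L + S := by omega
  have ht : ∀ n, t (n + 1) = L * t n + S * t (n - 1) := by
    rintro (_ | n)
    · simp [ht0, ht1]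
    · exact htrec (n + 2) (by omega)
  have hq : 1 < S * γ := by
    by_contra! h
    have hle : (L : ℝ) + 2 ≤ S := by exact_mod_cast hSL
    nlinarith
  have hq1 : 0 < S * γ - 1 := by linarith
  have hq0 : 0 < S * γ := by linarith
  refine ⟨2 * ((L + 2 * S) * (S * γ) / (S * γ - 1)), (1 - γ) / (S * γ), by positivity,
    div_pos (by linarith) hq0, fun n hn => ?_⟩
  obtain ⟨n, rfl⟩ := Nat.exists_eq_add_of_le' hn
  obtain ⟨hlow, hupp⟩ := pow_le_rpow_and_rpow_le hγ0 hγ1 hroot hq ht0 ht (n + 1)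
  have htpos : 0 < (t (n + 1) : ℝ) :=
    pos_of_mul_pos_left (one_pos.trans_le (one_le_mul_pow_and_le_inv hγ0 hγ1 hroot ht0 ht (n + 1)).1)
      (by positivity)
  constructor
  · refine le_trans ?_ (le_mul_discrep_lsSeq hL hb hγ0 hγ1 hroot hq ht0 ht htpos)
    rw [div_mul_eq_mul_div, div_le_iff₀ hq0, mul_assoc, mul_comm _ (S * γ)]
    exact mul_le_mul_of_nonneg_left hupp (by linarith)
  · exact (mul_discrep_lsSeq_le hL hb hγ0 hγ1 hroot hq ht0 ht htpos).trans (by gcongr)
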